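/- For all real s > 1 and a > 0, 1/(a+1)^s < ζ(s,a) − 1/a^s ≤ (1/(a+1)^s)·(s+a)/(s−1). -/

import Mathlib

/-!
Removing the term `k = 0` turns `ζ(s, a)` into `ζ(s, a + 1)`, so the theorem says that
`1 / x ^ s < ζ(s, x) ≤ 1 / x ^ s * ((s + x - 1) / (s - 1))` at `x = a + 1`. The lower bound is the
first term of the series; the upper bound is the integral test, which adds to the first term the
integral `∫ t in (x, ∞), t ^ (-s) = x ^ (1 - s) / (s - 1)`.
-/

open MeasureTheory Set

theorem tsum_natCast_add_le_add_integral_Ioi_of_antitoneOn {f : ℝ → ℝ} {x : ℝ}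
    (anti : AntitoneOn f (Ici x))
    (integrable : IntegrableOn f (Ioi x)) (nonneg : ∀ t ∈ Ioi x, 0 ≤ f t) :
    ∑' k : ℕ, f (k + x) ≤ f x + ∫ t in Ioi x, f t := by
  have shift : MeasurePreserving (fun t : ℝ ↦ t + x) volume volume :=
    measurePreserving_add_right volume x
  have emb : MeasurableEmbedding (fun t : ℝ ↦ t + x) := measurableEmbedding_addRight x
  have preimage_Ioi : (fun t : ℝ ↦ t + x) ⁻¹' Ioi x = Ioi 0 := by simp
  have anti_shift : AntitoneOn (fun t ↦ f (t + x)) (Ici 0) := fun t ht u hu htu ↦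
    anti (by simpa using ht) (by simpa using hu) (by simpa using htu)
  have integrable_shift : IntegrableOn (fun t ↦ f (t + x)) (Ioi 0) := by
    simpa only [Function.comp_def, preimage_Ioi] using
      (shift.integrableOn_comp_preimage emb).2 integrable
  have integral_shift : ∫ t in Ioi 0, f (t + x) = ∫ t in Ioi x, f t := by
    rw [← preimage_Ioi, shift.setIntegral_preimage_emb emb]
  simpa only [zero_add, integral_shift] using
    anti_shift.tsum_le_integral integrable_shift fun t ht ↦ nonneg _ (by simpa using ht)

section HurwitzSeries

variable {s x : ℝ}

theorem summable_one_div_natCast_add_rpow (hx : 0 < x) :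
    Summable (fun k : ℕ ↦ 1 / ((k : ℝ) + x) ^ s) ↔ 1 < s := by
  have abs_add (k : ℕ) : |(k : ℝ) + x| = k + x := abs_of_pos (by positivity)
  simpa only [abs_add] using Real.summable_one_div_nat_add_rpow x s

theorem one_div_rpow_add_tsum_one_div_natCast_add_one_rpow (hs : 1 < s) (hx : 0 < x) :
    1 / x ^ s + ∑' k : ℕ, 1 / ((k : ℝ) + (x + 1)) ^ s = ∑' k : ℕ, 1 / ((k : ℝ) + x) ^ s := by
  rw [((summable_one_div_natCast_add_rpow hx).2 hs).tsum_eq_zero_add]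
  simp only [Nat.cast_zero, zero_add, Nat.cast_add_one, add_assoc, add_comm x]

theorem one_div_rpow_lt_tsum_one_div_natCast_add_rpow (hs : 1 < s) (hx : 0 < x) :
    1 / x ^ s < ∑' k : ℕ, 1 / ((k : ℝ) + x) ^ s := by
  have summable_tail := (summable_one_div_natCast_add_rpow (add_pos hx one_pos)).2 hs
  rw [← one_div_rpow_add_tsum_one_div_natCast_add_one_rpow hs hx]
  exact lt_add_of_pos_right _ (summable_tail.tsum_pos (fun k ↦ by positivity) 0 (by positivity))

theorem tsum_one_div_natCast_add_rpow_le (hs : 1 < s) (hx : 0 < x) :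
    ∑' k : ℕ, 1 / ((k : ℝ) + x) ^ s ≤ 1 / x ^ s * ((s + x - 1) / (s - 1)) := by
  have one_div_rpow {t : ℝ} (ht : 0 < t) : 1 / t ^ s = t ^ (-s) := by
    rw [Real.rpow_neg ht.le, one_div]
  have anti : AntitoneOn (fun t : ℝ ↦ t ^ (-s)) (Ici x) :=
    (Real.antitoneOn_rpow_Ioi_of_exponent_nonpos (by linarith)).mono fun t ht ↦ hx.trans_le ht
  calc ∑' k : ℕ, 1 / ((k : ℝ) + x) ^ s
    _ = ∑' k : ℕ, ((k : ℝ) + x) ^ (-s) := tsum_congr fun k ↦ one_div_rpow (by positivity)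
    _ ≤ x ^ (-s) + ∫ t in Ioi x, t ^ (-s) :=
      tsum_natCast_add_le_add_integral_Ioi_of_antitoneOn anti
        (integrableOn_Ioi_rpow_of_lt (by linarith) hx)
        fun t ht ↦ Real.rpow_nonneg (hx.trans ht).le _
    _ = x ^ (-s) + -(x ^ (-s) * x) / (-s + 1) := by
      rw [integral_Ioi_rpow_of_lt (by linarith) hx, Real.rpow_add_one hx.ne']
    _ = 1 / x ^ s * ((s + x - 1) / (s - 1)) := by
      rw [one_div_rpow hx]
      have : s - 1 ≠ 0 := by linarith
      have : -s + 1 ≠ 0 := by linarith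
      field_simp
      ring

end HurwitzSeries

theorem hurwitzZeta_sub_bounds (s a : ℝ) (hs : 1 < s) (ha : 0 < a) :
    1 / (a + 1) ^ s < (∑' k : ℕ, 1 / ((k : ℝ) + a) ^ s) - 1 / a ^ s ∧
    (∑' k : ℕ, 1 / ((k : ℝ) + a) ^ s) - 1 / a ^ s ≤
      1 / (a + 1) ^ s * ((s + a) / (s - 1)) := by
  have ha₁ : 0 < a + 1 := by positivity
  rw [← one_div_rpow_add_tsum_one_div_natCast_add_one_rpow hs ha, add_sub_cancel_left]
  refine ⟨one_div_rpow_lt_tsum_one_div_natCast_add_rpow hs ha₁, ?_⟩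
  simpa only [← add_assoc, add_sub_cancel_right] using tsum_one_div_natCast_add_rpow_le hs ha₁
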